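/- Suppose that for all p, q ≥ 0 the spaces H^{p,q}_BC, H^{p,q}_∂ and H^{p,q}_∂̄ are finite-dimensional, and that there exists N ∈ ℕ with A^{p,q} = 0 whenever p ≥ N and q ≥ N. Then the following are equivalent: (i) dim H^{p,q}_BC = dim H^{p,q}_∂ = dim H^{p,q}_∂̄ for all p, q ≥ 0; (ii) the ∂∂̄-lemma holds on A^{p,q} for all p, q ≥ 0, i.e. ker ∂̄ ∩ ∂(A^{p-1,q}) = ker ∂ ∩ ∂̄(A^{p,q-1}) = (∂∂̄)(A^{p-1,q-1}) as subspaces of A^{p,q}. (This is the algebraic content of the paper's characterization: equality in the Frölicher-type inequality holds in all degrees if and only if the generalized ∂∂̄-lemma holds.) -/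

import Mathlib

open Submodule LinearMap Module

section Setup

variable (A : ℤ → ℤ → Type*) [∀ p q, AddCommGroup (A p q)] [∀ p q, Module ℂ (A p q)]

/-- The identification `A p q → A p' q'` induced by equalities of the bidegrees. -/
def castA {p q p' q' : ℤ} (h : p = p') (h' : q = q') : A p q →ₗ[ℂ] A p' q' := by
  subst h; subst h'; exact LinearMap.id

variable (d : ∀ p q : ℤ, A p q →ₗ[ℂ] A (p + 1) q) (db : ∀ p q : ℤ, A p q →ₗ[ℂ] A p (q + 1))

/-- The composite `∂∂̄ : A^{p,q} → A^{p+1,q} → A^{p+1,q+1}`. -/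
def ddb (p q : ℤ) : A p q →ₗ[ℂ] A (p + 1) (q + 1) := (db (p + 1) q).comp (d p q)

/-- `ker ∂ ∩ A^{p,q}` -/
def kerd (p q : ℤ) : Submodule ℂ (A p q) := LinearMap.ker (d p q)

/-- `ker ∂̄ ∩ A^{p,q}` -/
def kerdb (p q : ℤ) : Submodule ℂ (A p q) := LinearMap.ker (db p q)

/-- `∂(A^{p-1,q})` -/
def imd (p q : ℤ) : Submodule ℂ (A p q) :=
  LinearMap.range ((castA A (show p - 1 + 1 = p by ring) rfl).comp (d (p - 1) q))

/-- `∂̄(A^{p,q-1})` -/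
def imdb (p q : ℤ) : Submodule ℂ (A p q) :=
  LinearMap.range ((castA A rfl (show q - 1 + 1 = q by ring)).comp (db p (q - 1)))

/-- `(∂∂̄)(A^{p-1,q-1})` -/
def imddb (p q : ℤ) : Submodule ℂ (A p q) :=
  LinearMap.range
    ((castA A (show p - 1 + 1 = p by ring) (show q - 1 + 1 = q by ring)).comp
      (ddb A d db (p - 1) (q - 1)))

end Setup

/-- The quotient of a submodule `p` by (the preimage in `p` of) a submodule `q`. -/
abbrev SubQuot {V : Type*} [AddCommGroup V] [Module ℂ V] (p q : Submodule ℂ V) :=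
  ↥p ⧸ q.comap p.subtype

/-- The map `p/q → p'/q'` induced by the identity (inclusion) on representatives. -/
def qmap {V : Type*} [AddCommGroup V] [Module ℂ V] {p p' q q' : Submodule ℂ V}
    (hp : p ≤ p') (hq : q ≤ q') : SubQuot p q →ₗ[ℂ] SubQuot p' q' :=
  Submodule.mapQ _ _ (Submodule.inclusion hp) fun x hx => by
    simp only [Submodule.mem_comap, Submodule.subtype_apply, Submodule.coe_inclusion] at hx ⊢
    exact hq hx

section Cohomology

variable (A : ℤ → ℤ → Type*) [∀ p q, AddCommGroup (A p q)] [∀ p q, Module ℂ (A p q)]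
variable (d : ∀ p q : ℤ, A p q →ₗ[ℂ] A (p + 1) q) (db : ∀ p q : ℤ, A p q →ₗ[ℂ] A p (q + 1))

/-- `H^{p,q}_∂ = (ker ∂ ∩ A^{p,q})/∂(A^{p-1,q})` -/
abbrev Hpqd (p q : ℤ) := SubQuot (kerd A d p q) (imd A d p q)

/-- `H^{p,q}_∂̄ = (ker ∂̄ ∩ A^{p,q})/∂̄(A^{p,q-1})` -/
abbrev Hpqdb (p q : ℤ) := SubQuot (kerdb A db p q) (imdb A db p q)

/-- `H^{p,q}_BC = (ker ∂ ∩ ker ∂̄ ∩ A^{p,q})/(∂∂̄)(A^{p-1,q-1})` -/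
abbrev HpqBC (p q : ℤ) := SubQuot (kerd A d p q ⊓ kerdb A db p q) (imddb A d db p q)

end Cohomology

section Lemmas

variable (A : ℤ → ℤ → Type*) [∀ p q, AddCommGroup (A p q)] [∀ p q, Module ℂ (A p q)]
variable (d : ∀ p q : ℤ, A p q →ₗ[ℂ] A (p + 1) q) (db : ∀ p q : ℤ, A p q →ₗ[ℂ] A p (q + 1))

lemma castA_castA {p q p' q' p'' q'' : ℤ} (h1 : p = p') (h2 : q = q') (h3 : p' = p'')
    (h4 : q' = q'') (x : A p q) :
    castA A h3 h4 (castA A h1 h2 x) = castA A (h1.trans h3) (h2.trans h4) x := by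
  subst h1; subst h2; subst h3; subst h4; rfl

lemma d_castA {p q p' q' : ℤ} (h : p = p') (h' : q = q') (x : A p q) :
    d p' q' (castA A h h' x) = castA A (show p + 1 = p' + 1 by rw [h]) h' (d p q x) := by
  subst h; subst h'; rfl

lemma db_castA {p q p' q' : ℤ} (h : p = p') (h' : q = q') (x : A p q) :
    db p' q' (castA A h h' x) = castA A h (show q + 1 = q' + 1 by rw [h']) (db p q x) := by
  subst h; subst h'; rfl

lemma imddb_le_imdb (p q : ℤ) : imddb A d db p q ≤ imdb A db p q := by
  rintro x ⟨y, rfl⟩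
  refine ⟨castA A (show p - 1 + 1 = p by ring) rfl (d (p - 1) (q - 1) y), ?_⟩
  simp only [LinearMap.comp_apply, ddb, db_castA, castA_castA]

lemma imddb_le_imd
    (hanti : ∀ p q : ℤ, (db (p + 1) q).comp (d p q) + (d p (q + 1)).comp (db p q) = 0)
    (p q : ℤ) : imddb A d db p q ≤ imd A d p q := by
  rintro x ⟨y, rfl⟩
  refine ⟨-(castA A rfl (show q - 1 + 1 = q by ring) (db (p - 1) (q - 1) y)), ?_⟩
  have h := DFunLike.congr_fun (hanti (p - 1) (q - 1)) y
  simp only [LinearMap.add_apply, LinearMap.comp_apply, LinearMap.zero_apply] at h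
  simp only [LinearMap.comp_apply, map_neg, d_castA, castA_castA, ddb]
  rw [eq_neg_of_add_eq_zero_left h, map_neg]

end Lemmas

section Phi

variable (A : ℤ → ℤ → Type*) [∀ p q, AddCommGroup (A p q)] [∀ p q, Module ℂ (A p q)]
variable (d : ∀ p q : ℤ, A p q →ₗ[ℂ] A (p + 1) q) (db : ∀ p q : ℤ, A p q →ₗ[ℂ] A p (q + 1))
variable (hanti : ∀ p q : ℤ, (db (p + 1) q).comp (d p q) + (d p (q + 1)).comp (db p q) = 0)

/-- `φ^{p,q}_+ : H^{p,q}_BC → H^{p,q}_∂`, induced by the identity on representatives. -/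
def phiPlus (p q : ℤ) : HpqBC A d db p q →ₗ[ℂ] Hpqd A d p q :=
  qmap inf_le_left (imddb_le_imd A d db hanti p q)

/-- `φ^{p,q}_- : H^{p,q}_BC → H^{p,q}_∂̄`, induced by the identity on representatives. -/
def phiMinus (p q : ℤ) : HpqBC A d db p q →ₗ[ℂ] Hpqdb A db p q :=
  qmap inf_le_right (imddb_le_imdb A d db p q)

end Phi

/-!
If `∂x = 0`, then `∂̄x` lies in `ker ∂ ∩ im ∂̄`. When `φ₋^{p,q+1}` is injective this intersection
is `im ∂∂̄ = ∂̄(im ∂)`, so `x` can be corrected by a `∂`-exact element to be `∂̄`-closed as well: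
`φ₊^{p,q}` is surjective. Symmetrically, injectivity of `φ₊^{p+1,q}` makes `φ₋^{p,q}` surjective.

The `∂∂̄`-lemma says that all `φ₊`, `φ₋` are injective, hence they are all isomorphisms.
Conversely, if the dimensions agree, then surjectivity gives back injectivity, and injectivity
propagates from `(p + 1, q + 1)` down to `(p, q)`. It holds far out on every diagonal, where `A`
vanishes.
-/

section SubQuot

variable {V : Type*} [AddCommGroup V] [Module ℂ V] {p p' q q' : Submodule ℂ V}

lemma qmap_injective_iff (hp : p ≤ p') (hq : q ≤ q') :
    Function.Injective (qmap hp hq) ↔ p ⊓ q' ≤ q := by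
  rw [← LinearMap.ker_eq_bot, qmap, ker_mapQ, ← le_bot_iff, map_le_iff_le_comap, comap_bot,
    ker_mkQ, ← comap_comp, subtype_comp_inclusion, comap_subtype_le_iff]
  exact ⟨fun h ↦ h.trans inf_le_right, le_inf inf_le_left⟩

lemma qmap_surjective_iff (hp : p ≤ p') (hq : q ≤ q') :
    Function.Surjective (qmap hp hq) ↔ p' ≤ p ⊔ q' := by
  have map_sup_eq : (q'.comap p'.subtype ⊔ p.comap p'.subtype).map p'.subtype = (p ⊔ q') ⊓ p' := by
    rw [Submodule.map_sup, map_comap_subtype, map_comap_subtype, inf_eq_right.2 hp, sup_comm,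
      inf_comm, sup_inf_assoc_of_le _ hp]
  rw [← LinearMap.range_eq_top, qmap, range_mapQ, map_mkQ_eq_top, range_inclusion,
    ← (map_injective_of_injective p'.injective_subtype).eq_iff, map_sup_eq, Submodule.map_top,
    range_subtype, inf_eq_right]

end SubQuot

lemma le_inf_ker_sup_of_map_le_map {R V W : Type*} [Ring R] [AddCommGroup V] [Module R V]
    [AddCommGroup W] [Module R W] {f : V →ₗ[R] W} {P I : Submodule R V} (hIP : I ≤ P)
    (h : P.map f ≤ I.map f) : P ≤ P ⊓ ker f ⊔ I := by
  rw [LinearMap.map_le_map_iff] at h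
  rw [sup_comm, inf_comm, ← sup_inf_assoc_of_le _ hIP]
  exact le_inf h le_rfl

lemma injective_of_surjective_of_finrank_eq {K V W : Type*} [DivisionRing K] [AddCommGroup V]
    [Module K V] [AddCommGroup W] [Module K W] [FiniteDimensional K V] {f : V →ₗ[K] W}
    (hdim : finrank K V = finrank K W) (hf : Function.Surjective f) : Function.Injective f :=
  have := Module.Finite.of_surjective f hf
  (injective_iff_surjective_of_finrank_eq_finrank hdim).2 hf

lemma of_diagonal_step {R : Type*} [AddMonoidWithOne R] {P : R → R → Prop}
    (step : ∀ p q, P (p + 1) (q + 1) → P p q) (n : ℕ) : ∀ p q, P (p + n) (q + n) → P p q := by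
  induction n with
  | zero => simp
  | succ n ih =>
    intro p q h
    push_cast [← add_assoc] at h
    exact ih p q (step _ _ h)

section DoubleComplex

variable {A : ℤ → ℤ → Type*} [∀ p q, AddCommGroup (A p q)] [∀ p q, Module ℂ (A p q)]
variable {d : ∀ p q : ℤ, A p q →ₗ[ℂ] A (p + 1) q} {db : ∀ p q : ℤ, A p q →ₗ[ℂ] A p (q + 1)}

-- Replacing `p + 1 - 1` by a variable `p'` makes `castA` an identity by substitution.
lemma imd_add_one (p q : ℤ) : imd A d (p + 1) q = range (d p q) := by
  have reindex {p' : ℤ} (h : p' + 1 = p + 1) :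
      range ((castA A h rfl).comp (d p' q)) = range (d p q) := by
    obtain rfl : p' = p := by omega
    rfl
  exact reindex _

lemma imdb_add_one (p q : ℤ) : imdb A db p (q + 1) = range (db p q) := by
  have reindex {q' : ℤ} (h : q' + 1 = q + 1) :
      range ((castA A rfl h).comp (db p q')) = range (db p q) := by
    obtain rfl : q' = q := by omega
    rfl
  exact reindex _

lemma imddb_add_one (p q : ℤ) : imddb A d db (p + 1) (q + 1) = range (ddb A d db p q) := by
  have reindex {p' q' : ℤ} (hp : p' + 1 = p + 1) (hq : q' + 1 = q + 1) :
      range ((castA A hp hq).comp (ddb A d db p' q')) = range (ddb A d db p q) := by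
    obtain rfl : p' = p := by omega
    obtain rfl : q' = q := by omega
    rfl
  exact reindex _ _

lemma imd_le_kerd (hd2 : ∀ p q : ℤ, (d (p + 1) q).comp (d p q) = 0) (p q : ℤ) :
    imd A d p q ≤ kerd A d p q := by
  obtain ⟨p, rfl⟩ : ∃ p', p = p' + 1 := ⟨p - 1, by ring⟩
  rw [imd_add_one]
  exact range_le_ker_iff.2 (hd2 p q)

lemma imdb_le_kerdb (hdb2 : ∀ p q : ℤ, (db p (q + 1)).comp (db p q) = 0) (p q : ℤ) :
    imdb A db p q ≤ kerdb A db p q := by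
  obtain ⟨q, rfl⟩ : ∃ q', q = q' + 1 := ⟨q - 1, by ring⟩
  rw [imdb_add_one]
  exact range_le_ker_iff.2 (hdb2 p q)

lemma map_db_imd (p q : ℤ) : (imd A d p q).map (db p q) = imddb A d db p (q + 1) := by
  obtain ⟨p, rfl⟩ : ∃ p', p = p' + 1 := ⟨p - 1, by ring⟩
  rw [imd_add_one, imddb_add_one, ddb, range_comp]

variable (hanti : ∀ p q : ℤ, (db (p + 1) q).comp (d p q) + (d p (q + 1)).comp (db p q) = 0)
include hanti

lemma map_d_imdb (p q : ℤ) : (imdb A db p q).map (d p q) = imddb A d db (p + 1) q := by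
  obtain ⟨q, rfl⟩ : ∃ q', q = q' + 1 := ⟨q - 1, by ring⟩
  rw [imdb_add_one, imddb_add_one, ddb, eq_neg_of_add_eq_zero_left (hanti p q), range_neg,
    range_comp]

lemma map_db_kerd_le (p q : ℤ) :
    (kerd A d p q).map (db p q) ≤ kerd A d p (q + 1) ⊓ imdb A db p (q + 1) := by
  rw [imdb_add_one]
  refine le_inf (map_le_iff_le_comap.2 fun x hx ↦ ?_) map_le_range
  have hdx : d p q x = 0 := hx
  simpa [hdx, kerd] using LinearMap.congr_fun (hanti p q) x

lemma map_d_kerdb_le (p q : ℤ) :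
    (kerdb A db p q).map (d p q) ≤ kerdb A db (p + 1) q ⊓ imd A d (p + 1) q := by
  rw [imd_add_one]
  refine le_inf (map_le_iff_le_comap.2 fun x hx ↦ ?_) map_le_range
  have hdbx : db p q x = 0 := hx
  simpa [hdbx, kerdb] using LinearMap.congr_fun (hanti p q) x

variable (hd2 : ∀ p q : ℤ, (d (p + 1) q).comp (d p q) = 0)
variable (hdb2 : ∀ p q : ℤ, (db p (q + 1)).comp (db p q) = 0)

include hdb2 in
lemma imddb_le_kerdb_inf_imd (p q : ℤ) : imddb A d db p q ≤ kerdb A db p q ⊓ imd A d p q :=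
  le_inf ((imddb_le_imdb A d db p q).trans (imdb_le_kerdb hdb2 p q))
    (imddb_le_imd A d db hanti p q)

include hd2 in
lemma imddb_le_kerd_inf_imdb (p q : ℤ) : imddb A d db p q ≤ kerd A d p q ⊓ imdb A db p q :=
  le_inf ((imddb_le_imd A d db hanti p q).trans (imd_le_kerd hd2 p q)) (imddb_le_imdb A d db p q)

include hd2 hdb2

lemma phiPlus_injective_iff (p q : ℤ) :
    Function.Injective (phiPlus A d db hanti p q) ↔
      kerdb A db p q ⊓ imd A d p q = imddb A d db p q := by
  rw [phiPlus, qmap_injective_iff, inf_comm (kerd A d p q), inf_assoc,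
    inf_eq_right.2 (imd_le_kerd hd2 p q)]
  exact (imddb_le_kerdb_inf_imd hanti hdb2 p q).ge_iff_eq'

lemma phiMinus_injective_iff (p q : ℤ) :
    Function.Injective (phiMinus A d db p q) ↔
      kerd A d p q ⊓ imdb A db p q = imddb A d db p q := by
  rw [phiMinus, qmap_injective_iff, inf_assoc, inf_eq_right.2 (imdb_le_kerdb hdb2 p q)]
  exact (imddb_le_kerd_inf_imdb hanti hd2 p q).ge_iff_eq'

lemma phiPlus_surjective_of_phiMinus_injective {p q : ℤ}
    (h : Function.Injective (phiMinus A d db p (q + 1))) :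
    Function.Surjective (phiPlus A d db hanti p q) := by
  rw [phiMinus_injective_iff hanti hd2 hdb2] at h
  rw [phiPlus, qmap_surjective_iff]
  refine le_inf_ker_sup_of_map_le_map (imd_le_kerd hd2 p q) ?_
  calc (kerd A d p q).map (db p q)
      ≤ kerd A d p (q + 1) ⊓ imdb A db p (q + 1) := map_db_kerd_le hanti p q
    _ = imddb A d db p (q + 1) := h
    _ = (imd A d p q).map (db p q) := (map_db_imd p q).symm

lemma phiMinus_surjective_of_phiPlus_injective {p q : ℤ}
    (h : Function.Injective (phiPlus A d db hanti (p + 1) q)) :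
    Function.Surjective (phiMinus A d db p q) := by
  rw [phiPlus_injective_iff hanti hd2 hdb2] at h
  rw [phiMinus, qmap_surjective_iff, inf_comm]
  refine le_inf_ker_sup_of_map_le_map (imdb_le_kerdb hdb2 p q) ?_
  calc (kerdb A db p q).map (d p q)
      ≤ kerdb A db (p + 1) q ⊓ imd A d (p + 1) q := map_d_kerdb_le hanti p q
    _ = imddb A d db (p + 1) q := h
    _ = (imdb A db p q).map (d p q) := (map_d_imdb hanti p q).symm

lemma phiPlus_injective_of_phiMinus_injective {p q : ℤ} [FiniteDimensional ℂ (HpqBC A d db p q)]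
    (hdim : finrank ℂ (HpqBC A d db p q) = finrank ℂ (Hpqd A d p q))
    (h : Function.Injective (phiMinus A d db p (q + 1))) :
    Function.Injective (phiPlus A d db hanti p q) :=
  injective_of_surjective_of_finrank_eq hdim
    (phiPlus_surjective_of_phiMinus_injective hanti hd2 hdb2 h)

lemma phiMinus_injective_of_phiPlus_injective {p q : ℤ} [FiniteDimensional ℂ (HpqBC A d db p q)]
    (hdim : finrank ℂ (HpqBC A d db p q) = finrank ℂ (Hpqdb A db p q))
    (h : Function.Injective (phiPlus A d db hanti (p + 1) q)) :
    Function.Injective (phiMinus A d db p q) :=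
  injective_of_surjective_of_finrank_eq hdim
    (phiMinus_surjective_of_phiPlus_injective hanti hd2 hdb2 h)

lemma phi_injective_of_finrank_eq {S : Set (ℤ × ℤ)} (hS : IsUpperSet S)
    (hfinBC : ∀ p q, (p, q) ∈ S → FiniteDimensional ℂ (HpqBC A d db p q))
    (hdim : ∀ p q, (p, q) ∈ S →
      finrank ℂ (HpqBC A d db p q) = finrank ℂ (Hpqd A d p q) ∧
      finrank ℂ (HpqBC A d db p q) = finrank ℂ (Hpqdb A db p q))
    {p q : ℤ} (n : ℕ) [Subsingleton (A (p + n) (q + n))] (hpq : (p, q) ∈ S) :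
    Function.Injective (phiPlus A d db hanti p q) ∧ Function.Injective (phiMinus A d db p q) := by
  refine of_diagonal_step (P := fun p q ↦ (p, q) ∈ S →
    Function.Injective (phiPlus A d db hanti p q) ∧ Function.Injective (phiMinus A d db p q))
    (fun p q ih hpq ↦ ?_) n p q (fun _ ↦ ?_) hpq
  · have hp : (p + 1, q) ∈ S := hS (by simp) hpq
    have hq : (p, q + 1) ∈ S := hS (by simp) hpq
    obtain ⟨hPlus, hMinus⟩ := ih (hS (by simp) hp)
    have := hfinBC p q hpq
    have := hfinBC _ _ hp
    have := hfinBC _ _ hq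
    exact ⟨phiPlus_injective_of_phiMinus_injective hanti hd2 hdb2 (hdim p q hpq).1
        (phiMinus_injective_of_phiPlus_injective hanti hd2 hdb2 (hdim _ _ hq).2 hPlus),
      phiMinus_injective_of_phiPlus_injective hanti hd2 hdb2 (hdim p q hpq).2
        (phiPlus_injective_of_phiMinus_injective hanti hd2 hdb2 (hdim _ _ hp).1 hMinus)⟩
  · exact ⟨Function.injective_of_subsingleton _, Function.injective_of_subsingleton _⟩

lemma finrank_eq_of_phi_injective {S : Set (ℤ × ℤ)} (hS : IsUpperSet S)
    (hinj : ∀ p q, (p, q) ∈ S →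
      Function.Injective (phiPlus A d db hanti p q) ∧ Function.Injective (phiMinus A d db p q))
    {p q : ℤ} (hpq : (p, q) ∈ S) :
    finrank ℂ (HpqBC A d db p q) = finrank ℂ (Hpqd A d p q) ∧
      finrank ℂ (HpqBC A d db p q) = finrank ℂ (Hpqdb A db p q) :=
  ⟨(LinearEquiv.ofBijective _ ⟨(hinj p q hpq).1, phiPlus_surjective_of_phiMinus_injective
      hanti hd2 hdb2 (hinj p (q + 1) (hS (by simp) hpq)).2⟩).finrank_eq,
    (LinearEquiv.ofBijective _ ⟨(hinj p q hpq).2, phiMinus_surjective_of_phiPlus_injective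
      hanti hd2 hdb2 (hinj (p + 1) q (hS (by simp) hpq)).1⟩).finrank_eq⟩

end DoubleComplex

theorem equal_dims_iff_ddbar_lemma_general
    (A : ℤ → ℤ → Type*) [∀ p q, AddCommGroup (A p q)] [∀ p q, Module ℂ (A p q)]
    (d : ∀ p q : ℤ, A p q →ₗ[ℂ] A (p + 1) q) (db : ∀ p q : ℤ, A p q →ₗ[ℂ] A p (q + 1))
    (hd2 : ∀ p q : ℤ, (d (p + 1) q).comp (d p q) = 0)
    (hdb2 : ∀ p q : ℤ, (db p (q + 1)).comp (db p q) = 0)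
    (hanti : ∀ p q : ℤ, (db (p + 1) q).comp (d p q) + (d p (q + 1)).comp (db p q) = 0)
    {S : Set (ℤ × ℤ)} (hS : IsUpperSet S)
    (hfinBC : ∀ p q, (p, q) ∈ S → FiniteDimensional ℂ (HpqBC A d db p q))
    (hzero : ∀ p q, (p, q) ∈ S → ∃ n : ℕ, Subsingleton (A (p + n) (q + n))) :
    (∀ p q, (p, q) ∈ S →
        finrank ℂ (HpqBC A d db p q) = finrank ℂ (Hpqd A d p q) ∧
        finrank ℂ (HpqBC A d db p q) = finrank ℂ (Hpqdb A db p q)) ↔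
    (∀ p q, (p, q) ∈ S →
        kerdb A db p q ⊓ imd A d p q = imddb A d db p q ∧
        kerd A d p q ⊓ imdb A db p q = imddb A d db p q) := by
  simp only [← phiPlus_injective_iff hanti hd2 hdb2, ← phiMinus_injective_iff hanti hd2 hdb2]
  refine ⟨fun hdim p q hpq ↦ ?_, fun hinj p q ↦ finrank_eq_of_phi_injective hanti hd2 hdb2 hS hinj⟩
  obtain ⟨n, _⟩ := hzero p q hpq
  exact phi_injective_of_finrank_eq hanti hd2 hdb2 hS hfinBC hdim n hpq

/-- equality of the dimensions of Bott-Chern, `∂`- and `∂̄`-cohomologies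
in all bidegrees is equivalent to the `∂∂̄`-lemma holding on every `A^{p,q}`. -/
theorem equal_dims_iff_ddbar_lemma
    (A : ℤ → ℤ → Type*) [∀ p q, AddCommGroup (A p q)] [∀ p q, Module ℂ (A p q)]
    (hA0 : ∀ p q : ℤ, p < 0 ∨ q < 0 → ∀ x : A p q, x = 0)
    (d : ∀ p q : ℤ, A p q →ₗ[ℂ] A (p + 1) q) (db : ∀ p q : ℤ, A p q →ₗ[ℂ] A p (q + 1))
    (hd2 : ∀ p q : ℤ, (d (p + 1) q).comp (d p q) = 0)
    (hdb2 : ∀ p q : ℤ, (db p (q + 1)).comp (db p q) = 0)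
    (hanti : ∀ p q : ℤ, (db (p + 1) q).comp (d p q) + (d p (q + 1)).comp (db p q) = 0)
    (hfinBC : ∀ p q : ℤ, 0 ≤ p → 0 ≤ q → FiniteDimensional ℂ (HpqBC A d db p q))
    (hfind : ∀ p q : ℤ, 0 ≤ p → 0 ≤ q → FiniteDimensional ℂ (Hpqd A d p q))
    (hfindb : ∀ p q : ℤ, 0 ≤ p → 0 ≤ q → FiniteDimensional ℂ (Hpqdb A db p q))
    (N : ℕ) (hN : ∀ p q : ℤ, (N : ℤ) ≤ p → (N : ℤ) ≤ q → ∀ x : A p q, x = 0) :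
    (∀ p q : ℤ, 0 ≤ p → 0 ≤ q →
        finrank ℂ (HpqBC A d db p q) = finrank ℂ (Hpqd A d p q) ∧
        finrank ℂ (HpqBC A d db p q) = finrank ℂ (Hpqdb A db p q)) ↔
    (∀ p q : ℤ, 0 ≤ p → 0 ≤ q →
        kerdb A db p q ⊓ imd A d p q = imddb A d db p q ∧
        kerd A d p q ⊓ imdb A db p q = imddb A d db p q) := by
  simpa only [Set.mem_Ici, Prod.mk_le_mk, and_imp] using
    equal_dims_iff_ddbar_lemma_general A d db hd2 hdb2 hanti (isUpperSet_Ici (0, 0))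
      (fun p q h ↦ hfinBC p q h.1 h.2) fun p q h ↦ ⟨N, subsingleton_of_forall_eq 0
        (hN _ _ (le_add_of_nonneg_left h.1) (le_add_of_nonneg_left h.2))⟩
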